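/- Let F be a dill map with diameter s and local rule f, and M, M' ∈ ℕ be such that for every finite word u and every position j < |u|: d_L(f^*(D_j(u)), f^*(u)) ≤ M + (|f^*(u)| − |f^*(D_j(u))|)/2 and d_L(f^*(D_j(u)), f^*(u)) ≤ M' − (|f^*(u)| − |f^*(D_j(u))|)/2. Let L > 0 and x ∈ A^ℕ be such that |f(x_[i,i+s))| ≥ L for every i ∈ ℕ. Then for every y ∈ A^ℕ, 𝔡_L(F(x), F(y)) ≤ ((M + M')/L)·𝔡_L(x,y). -/

import Mathlib

open Filter

/-- The finite factor `x_[i, i+n)` of the infinite word `x`. -/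
def factor {A : Type*} (x : ℕ → A) (i n : ℕ) : List A := List.ofFn (fun k : Fin n => x (i + k))

/-- The shift map `σ` on infinite words. -/
def shift {A : Type*} (x : ℕ → A) : ℕ → A := fun i => x (i + 1)
/-- The maximal length of a common (not necessarily contiguous) subsequence of `u` and `v`. -/
noncomputable def lcs {A : Type*} (u v : List A) : ℕ :=
  sSup {n | ∃ w : List A, w.length = n ∧ w.Sublist u ∧ w.Sublist v}

/-- The (halved) Levenshtein distance `d_L(u,v) = (|u|+|v|)/2 - ℓ(u,v)`. -/
noncomputable def levD {A : Type*} (u v : List A) : ℝ :=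
  ((u.length : ℝ) + v.length) / 2 - lcs u v

/-- The Feldman pseudometric `𝔡_L`. -/
noncomputable def feld {A : Type*} (x y : ℕ → A) : ℝ :=
  limsup (fun l : ℕ => levD (factor x 0 l) (factor y 0 l) / l) atTop
/-- The window `x_[i, i+s)` of the infinite word `x`, as an element of `A^s`. -/
def window {A : Type*} (x : ℕ → A) (i : ℕ) (s : ℕ) : Fin s → A := fun k => x (i + k)

/-- The cocycle `S_n(x) = ∑_{j<n} |f(x_[j,j+s))|` of a local rule `f`. -/
def cocycle {A : Type*} {s : ℕ} (f : (Fin s → A) → List A) (x : ℕ → A) (n : ℕ) : ℕ :=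
  ∑ j ∈ Finset.range n, (f (window x j s)).length

/-- `F` is the dill map with local rule `f`: for every `x`, `F x` is the infinite
concatenation `f(x_[0,s)) f(x_[1,1+s)) f(x_[2,2+s)) ⋯`. -/
def IsDillVia {A : Type*} {s : ℕ} (f : (Fin s → A) → List A) (F : (ℕ → A) → ℕ → A) : Prop :=
  ∀ (x : ℕ → A) (n k : ℕ) (h : k < (f (window x n s)).length),
    F x (cocycle f x n + k) = (f (window x n s)).get ⟨k, h⟩
/-- The window `u_[i, i+s)` of the finite word `u`. -/
def listWindow {A : Type*} [Inhabited A] (u : List A) (i : ℕ) (s : ℕ) : Fin s → A :=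
  fun k => u.getD (i + k) default

/-- The extension `f^*` of a local rule `f` to finite words:
`f^*(u) = f(u_[0,s)) ⋯ f(u_[|u|-s,|u|))` when `|u| ≥ s`, and the empty word otherwise. -/
def fstar {A : Type*} [Inhabited A] {s : ℕ} (f : (Fin s → A) → List A) (u : List A) : List A :=
  ((List.range (u.length + 1 - s)).map (fun i => f (listWindow u i s))).flatten

/-!
Write `δ(u, v) = |u| - ℓ(u, v)` for the number of letters to delete from `u` to reach a subword
of `v`. This is a directed distance, and `d_L(u, v) = δ(u, v) + (|v| - |u|) / 2`. The two deletion
bounds on `g = f^*` therefore say `δ(g(D_j(u)), g(u)) ≤ M` and `δ(g(u), g(D_j(u))) ≤ M'`. Passing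
from `u` to `v` through a longest common subword gives
`δ(g(u), g(v)) ≤ M' δ(u, v) + M δ(v, u)`, which is `(M + M') d_L(u, v)` when `|u| = |v|`.

For prefixes of `x` and `y` of length `n` this compares prefixes of `F(x)` and `F(y)` whose lengths
may differ. The prefix of `F(x)` has length at least `L n - O(1)`, and that length grows by at most
`M'` from `n` to `n + 1`, so every long prefix of `F(x)` is reached up to `M'` letters. Truncating
the image of `y` to the same length costs nothing for one of the two directions of `δ`.
-/

section DelCost

variable {A : Type*}

theorem bddAbove_length_common_sublist (u v : List A) :
    BddAbove {n | ∃ w : List A, w.length = n ∧ w.Sublist u ∧ w.Sublist v} :=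
  ⟨u.length, by rintro _ ⟨_, rfl, h, -⟩; exact h.length_le⟩

theorem length_le_lcs {u v w : List A} (hu : w.Sublist u) (hv : w.Sublist v) :
    w.length ≤ lcs u v :=
  le_csSup (bddAbove_length_common_sublist u v) ⟨w, rfl, hu, hv⟩

theorem exists_sublist_length_eq_lcs (u v : List A) :
    ∃ w : List A, w.length = lcs u v ∧ w.Sublist u ∧ w.Sublist v :=
  Nat.sSup_mem (s := {n | ∃ w : List A, w.length = n ∧ w.Sublist u ∧ w.Sublist v})
    ⟨0, [], rfl, u.nil_sublist, v.nil_sublist⟩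
    (bddAbove_length_common_sublist u v)

theorem lcs_comm (u v : List A) : lcs u v = lcs v u := by
  simp only [lcs, and_comm]

theorem lcs_le_length_right (u v : List A) : lcs u v ≤ v.length := by
  obtain ⟨w, hw, -, hwv⟩ := exists_sublist_length_eq_lcs u v
  exact hw ▸ hwv.length_le

theorem lcs_le_length_left (u v : List A) : lcs u v ≤ u.length :=
  lcs_comm u v ▸ lcs_le_length_right v u

theorem exists_common_sublist_of_sublist {a b v : List A} (ha : a.Sublist v) (hb : b.Sublist v) :
    ∃ c : List A, c.Sublist a ∧ c.Sublist b ∧ a.length + b.length ≤ v.length + c.length := by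
  induction v generalizing a b with
  | nil =>
    obtain rfl := List.sublist_nil.mp ha
    obtain rfl := List.sublist_nil.mp hb
    exact ⟨[], .refl _, .refl _, le_rfl⟩
  | cons z v ih =>
    rcases List.sublist_cons_iff.mp ha with ha' | ⟨a', rfl, ha'⟩ <;>
    rcases List.sublist_cons_iff.mp hb with hb' | ⟨b', rfl, hb'⟩ <;>
    obtain ⟨c, hca, hcb, hlen⟩ := ih ha' hb'
    · exact ⟨c, hca, hcb, by grind⟩
    · exact ⟨c, hca, hcb.cons _, by grind⟩
    · exact ⟨c, hca.cons _, hcb, by grind⟩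
    · exact ⟨z :: c, hca.cons_cons _, hcb.cons_cons _, by grind⟩

/-- The directed deletion distance `δ(u, v) = |u| - ℓ(u, v)`: the least number of letters to delete
from `u` in order to obtain a subword of `v`. It is real-valued so that it can be compared with
`levD`. -/
noncomputable def delCost (u v : List A) : ℝ := u.length - lcs u v

theorem delCost_nonneg (u v : List A) : 0 ≤ delCost u v :=
  sub_nonneg.mpr (mod_cast lcs_le_length_left u v)

theorem length_sub_length_le_delCost (u v : List A) :
    (u.length : ℝ) - v.length ≤ delCost u v :=
  sub_le_sub_left (mod_cast lcs_le_length_right u v) _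

theorem delCost_le_length_sub_length_of_sublist {u v : List A} (h : v.Sublist u) :
    delCost u v ≤ (u.length : ℝ) - v.length :=
  sub_le_sub_left (mod_cast length_le_lcs h (.refl v)) _

theorem delCost_nonpos_of_sublist {u v : List A} (h : u.Sublist v) : delCost u v ≤ 0 :=
  sub_nonpos.mpr (mod_cast length_le_lcs (.refl u) h)

theorem delCost_triangle (u v w : List A) : delCost u w ≤ delCost u v + delCost v w := by
  obtain ⟨a, ha, hau, hav⟩ := exists_sublist_length_eq_lcs u v
  obtain ⟨b, hb, hbv, hbw⟩ := exists_sublist_length_eq_lcs v w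
  obtain ⟨c, hca, hcb, hlen⟩ := exists_common_sublist_of_sublist hav hbv
  have hc : c.length ≤ lcs u w := length_le_lcs (hca.trans hau) (hcb.trans hbw)
  have hlcs : (lcs u v + lcs v w : ℝ) ≤ v.length + lcs u w := by norm_cast; omega
  unfold delCost
  linarith

theorem levD_comm (u v : List A) : levD u v = levD v u := by
  rw [levD, levD, lcs_comm, add_comm (u.length : ℝ)]

theorem levD_eq_delCost_add (u v : List A) :
    levD u v = delCost u v + ((v.length : ℝ) - u.length) / 2 := by
  unfold levD delCost
  ring

theorem levD_eq_delCost {u v : List A} (h : u.length = v.length) : levD u v = delCost u v := by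
  rw [levD_eq_delCost_add, h, sub_self, zero_div, add_zero]

end DelCost

section DeletionBounds

variable {A B : Type*}

theorem le_mul_length_sub_of_sublist {d : List A → List A → ℝ} {K : ℝ} (hself : ∀ u, d u u ≤ 0)
    (htri : ∀ u v w, d u w ≤ d u v + d v w)
    (herase : ∀ u j, j < u.length → d (u.eraseIdx j) u ≤ K)
    {w u : List A} (h : w.Sublist u) : d w u ≤ K * ((u.length : ℝ) - w.length) := by
  suffices key : ∀ p : List A, d (p ++ w) (p ++ u) ≤ K * ((u.length : ℝ) - w.length) from key []
  induction h with
  | slnil => intro p; simpa using hself p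
  | @cons w u a _ ih =>
    intro p
    have hdel : d (p ++ u) (p ++ a :: u) ≤ K := by
      simpa [List.eraseIdx_append_of_length_le] using herase (p ++ a :: u) p.length (by simp)
    calc d (p ++ w) (p ++ a :: u)
        ≤ d (p ++ w) (p ++ u) + d (p ++ u) (p ++ a :: u) := htri _ _ _
      _ ≤ K * ((u.length : ℝ) - w.length) + K := add_le_add (ih p) hdel
      _ = K * (((a :: u).length : ℝ) - w.length) := by push_cast [List.length_cons]; ring
  | cons_cons a _ ih => intro p; simpa using ih (p ++ [a])

/-- The deletion bounds with constants `M` and `M'` for a map `g` on finite words, such as `f^*`: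
deleting one letter of `u` moves `g u` by at most `M + (|g u| - |g (D_j u)|) / 2` and at most
`M' - (|g u| - |g (D_j u)|) / 2`. -/
structure HasDeletionBounds (g : List A → List B) (M M' : ℝ) : Prop where
  levD_le_add : ∀ (u : List A) (j : ℕ), j < u.length → levD (g (u.eraseIdx j)) (g u) ≤
    M + (((g u).length : ℝ) - ((g (u.eraseIdx j)).length : ℝ)) / 2
  levD_le_sub : ∀ (u : List A) (j : ℕ), j < u.length → levD (g (u.eraseIdx j)) (g u) ≤
    M' - (((g u).length : ℝ) - ((g (u.eraseIdx j)).length : ℝ)) / 2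

namespace HasDeletionBounds

variable {g : List A → List B} {M M' : ℝ}

theorem delCost_eraseIdx_left_le (hg : HasDeletionBounds g M M') (u : List A) (j : ℕ)
    (hj : j < u.length) : delCost (g (u.eraseIdx j)) (g u) ≤ M := by
  linarith [hg.levD_le_add u j hj, levD_eq_delCost_add (g (u.eraseIdx j)) (g u)]

theorem delCost_eraseIdx_right_le (hg : HasDeletionBounds g M M') (u : List A) (j : ℕ)
    (hj : j < u.length) : delCost (g u) (g (u.eraseIdx j)) ≤ M' := by
  linarith [hg.levD_le_sub u j hj, levD_comm (g (u.eraseIdx j)) (g u),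
    levD_eq_delCost_add (g u) (g (u.eraseIdx j))]

theorem constants_add_nonneg [Nonempty A] (hg : HasDeletionBounds g M M') : 0 ≤ M + M' := by
  obtain ⟨a⟩ := ‹Nonempty A›
  exact add_nonneg
    ((delCost_nonneg _ _).trans (hg.delCost_eraseIdx_left_le [a] 0 Nat.one_pos))
    ((delCost_nonneg _ _).trans (hg.delCost_eraseIdx_right_le [a] 0 Nat.one_pos))

theorem delCost_sublist_left_le (hg : HasDeletionBounds g M M') {w u : List A} (h : w.Sublist u) :
    delCost (g w) (g u) ≤ M * ((u.length : ℝ) - w.length) :=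
  le_mul_length_sub_of_sublist (d := fun w u => delCost (g w) (g u))
    (fun _ => delCost_nonpos_of_sublist (.refl _)) (fun _ _ _ => delCost_triangle _ _ _)
    hg.delCost_eraseIdx_left_le h

theorem delCost_sublist_right_le (hg : HasDeletionBounds g M M') {w u : List A} (h : w.Sublist u) :
    delCost (g u) (g w) ≤ M' * ((u.length : ℝ) - w.length) :=
  le_mul_length_sub_of_sublist (d := fun w u => delCost (g u) (g w))
    (fun _ => delCost_nonpos_of_sublist (.refl _))
    (fun _ _ _ => (delCost_triangle _ _ _).trans_eq (add_comm _ _))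
    hg.delCost_eraseIdx_right_le h

theorem delCost_le (hg : HasDeletionBounds g M M') (u v : List A) :
    delCost (g u) (g v) ≤ M' * delCost u v + M * delCost v u := by
  obtain ⟨w, hw, hwu, hwv⟩ := exists_sublist_length_eq_lcs u v
  calc delCost (g u) (g v)
      ≤ delCost (g u) (g w) + delCost (g w) (g v) := delCost_triangle _ _ _
    _ ≤ M' * ((u.length : ℝ) - w.length) + M * ((v.length : ℝ) - w.length) :=
      add_le_add (hg.delCost_sublist_right_le hwu) (hg.delCost_sublist_left_le hwv)
    _ = M' * delCost u v + M * delCost v u := by rw [delCost, delCost, lcs_comm v u, hw]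

theorem delCost_le_mul_levD (hg : HasDeletionBounds g M M') {u v : List A}
    (h : u.length = v.length) : delCost (g u) (g v) ≤ (M + M') * levD u v := by
  have hcost := hg.delCost_le u v
  rw [← levD_eq_delCost h, ← levD_eq_delCost h.symm, levD_comm v u] at hcost
  linarith

end HasDeletionBounds

end DeletionBounds

section Factor

variable {A : Type*}

@[simp]
theorem length_factor (x : ℕ → A) (i n : ℕ) : (factor x i n).length = n :=
  List.length_ofFn

theorem factor_add (x : ℕ → A) (i m n : ℕ) :
    factor x i (m + n) = factor x i m ++ factor x (i + m) n := by
  simp only [factor, List.ofFn_add, Fin.val_castLE, Fin.val_natAdd, add_assoc]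

theorem factor_sublist_factor (x : ℕ → A) (i : ℕ) {m n : ℕ} (h : m ≤ n) :
    (factor x i m).Sublist (factor x i n) := by
  obtain ⟨k, rfl⟩ := Nat.exists_eq_add_of_le h
  exact factor_add x i m k ▸ List.sublist_append_left _ _

theorem eraseIdx_factor_succ (x : ℕ → A) (i n : ℕ) :
    (factor x i (n + 1)).eraseIdx n = factor x i n := by
  rw [factor_add, List.eraseIdx_append_of_length_le (length_factor x i n).le, length_factor,
    Nat.sub_self, List.eraseIdx_eq_nil_iff.mpr (by simp), List.append_nil]

theorem levD_factor_nonneg (x y : ℕ → A) (i l : ℕ) : 0 ≤ levD (factor x i l) (factor y i l) := by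
  rw [levD_eq_delCost (by simp only [length_factor])]
  exact delCost_nonneg _ _

theorem levD_factor_le (x y : ℕ → A) (i l : ℕ) : levD (factor x i l) (factor y i l) ≤ l := by
  rw [levD_eq_delCost (by simp only [length_factor]), delCost, length_factor]
  exact sub_le_self _ (Nat.cast_nonneg _)

theorem levD_factor_le_add_sub (x y : ℕ → A) (i : ℕ) {k k' l : ℕ} {c : ℝ} (hk : k ≤ l)
    (hxy : delCost (factor x i k) (factor y i k') ≤ c)
    (hyx : delCost (factor y i k') (factor x i k) ≤ c) :
    levD (factor x i l) (factor y i l) ≤ c + ((l : ℝ) - k) := by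
  -- Words of equal length: `levD` may be computed by either direction of `delCost`, and we choose
  -- the one in which passing between the prefixes of `y` of lengths `k'` and `l` is free.
  rcases le_total k' l with hk' | hk'
  · have hx := delCost_le_length_sub_length_of_sublist (factor_sublist_factor x i hk)
    rw [length_factor, length_factor] at hx
    have hy := delCost_nonpos_of_sublist (factor_sublist_factor y i hk')
    rw [levD_eq_delCost (by simp only [length_factor])]
    linarith [delCost_triangle (factor x i l) (factor x i k) (factor y i l),
      delCost_triangle (factor x i k) (factor y i k') (factor y i l)]
  · have hx := delCost_nonpos_of_sublist (factor_sublist_factor x i hk)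
    have hy := delCost_nonpos_of_sublist (factor_sublist_factor y i hk')
    have hkl : (k : ℝ) ≤ l := mod_cast hk
    rw [levD_comm, levD_eq_delCost (by simp only [length_factor])]
    linarith [delCost_triangle (factor y i l) (factor y i k') (factor x i l),
      delCost_triangle (factor y i k') (factor x i k) (factor x i l)]

end Factor

section Limsup

theorem exists_tendsto_atTop_le_lt_succ {α : Type*} [LinearOrder α] [NoMaxOrder α] {S : ℕ → α}
    (hS : Tendsto S atTop atTop) :
    ∃ m : α → ℕ, Tendsto m atTop atTop ∧ ∀ᶠ l in atTop, S (m l) ≤ l ∧ l < S (m l + 1) := by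
  have hbdd (l : α) : BddAbove {n | S n ≤ l} := by
    obtain ⟨N, hN⟩ := eventually_atTop.mp (hS.eventually_gt_atTop l)
    exact ⟨N, fun n hn => not_lt.mp fun hNn => (hN n hNn.le).not_ge hn⟩
  refine ⟨fun l => sSup {n | S n ≤ l}, tendsto_atTop.mpr fun N => ?_, ?_⟩
  · filter_upwards [eventually_ge_atTop (S N)] with l hl using le_csSup (hbdd l) hl
  · filter_upwards [eventually_ge_atTop (S 0)] with l hl
    exact ⟨Nat.sSup_mem ⟨0, hl⟩ (hbdd l),
      not_le.mp fun h => (Nat.lt_succ_self _).not_ge (le_csSup (hbdd l) h)⟩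

theorem limsup_div_le_of_le_comp {a b : ℕ → ℝ} {m : ℕ → ℕ} {C D E L : ℝ} (hC : 0 ≤ C) (hL : 0 < L)
    (ha : ∀ n, 0 ≤ a n) (hb : ∀ n, 0 ≤ b n)
    (ha_bdd : IsBoundedUnder (· ≤ ·) atTop fun n : ℕ => a n / n)
    (hm : Tendsto m atTop atTop) (hmL : ∀ᶠ l : ℕ in atTop, L * m l ≤ l + E)
    (hab : ∀ᶠ l in atTop, b l ≤ C * a (m l) + D) :
    limsup (fun l : ℕ => b l / l) atTop ≤ C / L * limsup (fun n : ℕ => a n / n) atTop := by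
  have of_lt {c : ℝ} (hc : limsup (fun n : ℕ => a n / n) atTop < c) :
      limsup (fun l : ℕ => b l / l) atTop ≤ C / L * c := by
    have hac : ∀ᶠ n : ℕ in atTop, 0 < c ∧ a n ≤ c * n := by
      filter_upwards [eventually_lt_of_limsup_lt hc ha_bdd, eventually_gt_atTop 0] with n hn hn0
      have hn0' : (0 : ℝ) < n := mod_cast hn0
      exact ⟨(div_nonneg (ha n) hn0'.le).trans_lt hn, ((div_lt_iff₀ hn0').mp hn).le⟩
    have hlim : Tendsto (fun l : ℕ => C / L * c + (C / L * c * E + D) / l) atTop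
        (nhds (C / L * c)) := by
      simpa using tendsto_const_nhds.add (tendsto_const_div_atTop_nhds_zero_nat (C / L * c * E + D))
    rw [← hlim.limsup_eq]
    refine limsup_le_limsup ?_ ?_ hlim.isBoundedUnder_le
    · filter_upwards [hm.eventually hac, hmL, hab, eventually_gt_atTop 0]
        with l ⟨hc0, hal⟩ hml hbl hl
      have hl' : (0 : ℝ) < l := mod_cast hl
      rw [div_le_iff₀ hl']
      calc b l ≤ C * a (m l) + D := hbl
        _ ≤ C * (c * m l) + D := by gcongr
        _ = C / L * c * (L * m l) + D := by field_simp
        _ ≤ C / L * c * (l + E) + D := by gcongr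
        _ = (C / L * c + (C / L * c * E + D) / l) * l := by field_simp; ring
    · exact (isBoundedUnder_of ⟨0, fun l => div_nonneg (hb l) l.cast_nonneg⟩ :
        IsBoundedUnder (· ≥ ·) atTop _).isCoboundedUnder_le
  exact ge_of_tendsto ((continuous_const_mul (C / L)).continuousWithinAt (s := Set.Ioi _))
    (eventually_mem_nhdsWithin.mono fun _ => of_lt)

end Limsup

section Feldman

variable {A B : Type*} {g : List A → List B} {M M' L E : ℝ} {x y : ℕ → A}
  {X Y : ℕ → B} {S T : ℕ → ℕ}

theorem HasDeletionBounds.length_succ_le (hg : HasDeletionBounds g M M')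
    (hX : ∀ n, g (factor x 0 n) = factor X 0 (S n)) (n : ℕ) : (S (n + 1) : ℝ) ≤ S n + M' := by
  have hcost := hg.delCost_eraseIdx_right_le (factor x 0 (n + 1)) n (by simp)
  rw [eraseIdx_factor_succ, hX, hX] at hcost
  have hlen := length_sub_length_le_delCost (factor X 0 (S (n + 1))) (factor X 0 (S n))
  rw [length_factor, length_factor] at hlen
  linarith

theorem HasDeletionBounds.feld_le (hg : HasDeletionBounds g M M') (hL : 0 < L)
    (hX : ∀ n, g (factor x 0 n) = factor X 0 (S n))
    (hY : ∀ n, g (factor y 0 n) = factor Y 0 (T n))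
    (hS : ∀ n : ℕ, L * n ≤ S n + E) : feld X Y ≤ (M + M') / L * feld x y := by
  have : Nonempty A := ⟨x 0⟩
  have hS_tendsto : Tendsto S atTop atTop := by
    refine tendsto_natCast_atTop_iff (R := ℝ).mp (tendsto_atTop_mono (fun n => ?_)
      (tendsto_atTop_add_const_right _ (-E) (tendsto_natCast_atTop_atTop.const_mul_atTop hL)))
    linarith [hS n]
  obtain ⟨m, hm, hml⟩ := exists_tendsto_atTop_le_lt_succ hS_tendsto
  refine limsup_div_le_of_le_comp (m := m) (D := M') (E := E) hg.constants_add_nonneg hL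
    (levD_factor_nonneg x y 0) (levD_factor_nonneg X Y 0)
    (isBoundedUnder_of ⟨1, fun n => div_le_one_of_le₀ (levD_factor_le x y 0 n) n.cast_nonneg⟩)
    hm ?_ ?_
  · filter_upwards [hml] with l ⟨hle, _⟩
    have hle' : (S (m l) : ℝ) ≤ l := mod_cast hle
    linarith [hS (m l)]
  · filter_upwards [hml] with l ⟨hle, hlt⟩
    have hlt' : (l : ℝ) < S (m l + 1) := mod_cast hlt
    have hXY := hg.delCost_le_mul_levD (u := factor x 0 (m l)) (v := factor y 0 (m l)) (by simp)
    have hYX := hg.delCost_le_mul_levD (u := factor y 0 (m l)) (v := factor x 0 (m l)) (by simp)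
    rw [levD_comm] at hYX
    rw [hX, hY] at hXY hYX
    linarith [levD_factor_le_add_sub X Y 0 hle hXY hYX, hg.length_succ_le hX (m l)]

end Feldman

section Dill

variable {A : Type*} {s : ℕ} {f : (Fin s → A) → List A} {F : (ℕ → A) → ℕ → A}

theorem cocycle_succ (f : (Fin s → A) → List A) (x : ℕ → A) (n : ℕ) :
    cocycle f x (n + 1) = cocycle f x n + (f (window x n s)).length :=
  Finset.sum_range_succ _ n

theorem mul_le_cocycle {x : ℕ → A} {L : ℝ} (hx : ∀ i, L ≤ (f (window x i s)).length) (n : ℕ) :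
    L * n ≤ cocycle f x n := by
  simpa [cocycle, mul_comm] using Finset.card_nsmul_le_sum (Finset.range n) _ L fun i _ => hx i

theorem IsDillVia.factor_cocycle (hF : IsDillVia f F) (x : ℕ → A) (n : ℕ) :
    factor (F x) (cocycle f x n) (f (window x n s)).length = f (window x n s) :=
  List.ext_getElem (length_factor _ _ _) fun k _ hk => by
    simpa [factor] using hF x n k hk

theorem IsDillVia.flatten_map_window (hF : IsDillVia f F) (x : ℕ → A) (n : ℕ) :
    ((List.range n).map fun i => f (window x i s)).flatten = factor (F x) 0 (cocycle f x n) := by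
  induction n with
  | zero => rfl
  | succ n ih =>
    simp only [List.range_succ, List.map_append, List.flatten_append, ih, List.map_singleton,
      List.flatten_singleton, cocycle_succ, factor_add, zero_add, hF.factor_cocycle]

variable [Inhabited A]

theorem listWindow_factor (x : ℕ → A) {i n : ℕ} (h : i + s ≤ n) :
    listWindow (factor x 0 n) i s = window x i s := by
  funext k
  have hk : i + k < (factor x 0 n).length := by rw [length_factor]; omega
  rw [listWindow, List.getD_eq_getElem _ _ hk]
  simp [factor, window]

theorem IsDillVia.fstar_factor (hF : IsDillVia f F) (x : ℕ → A) (n : ℕ) :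
    fstar f (factor x 0 n) = factor (F x) 0 (cocycle f x (n + 1 - s)) := by
  rw [← hF.flatten_map_window, fstar, length_factor]
  refine congrArg List.flatten (List.map_congr_left fun i hi => ?_)
  rw [List.mem_range] at hi
  rw [listWindow_factor x (by omega)]

end Dill

theorem dill_feld_pointwise_lipschitz_general {A : Type*} [Inhabited A] {s : ℕ}
    {f : (Fin s → A) → List A} {F : (ℕ → A) → ℕ → A} (hF : IsDillVia f F) {M M' : ℝ}
    (hfstar : HasDeletionBounds (fstar f) M M') {L E : ℝ} (hL : 0 < L) {x : ℕ → A}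
    (hx : ∀ n : ℕ, L * n ≤ cocycle f x n + E) (y : ℕ → A) :
    feld (F x) (F y) ≤ (M + M') / L * feld x y := by
  refine hfstar.feld_le (E := E + L * s) hL (hF.fstar_factor x) (hF.fstar_factor y) fun n => ?_
  have hn : (n : ℝ) ≤ (n + 1 - s : ℕ) + s := by norm_cast; omega
  linarith [hx (n + 1 - s), mul_le_mul_of_nonneg_left hn hL.le]

/-- Under the deletion bounds for `f^*` with constants `M, M'`, if `x` is such that
`|f(x_[i,i+s))| ≥ L` for every `i`, then `𝔡_L(F(x), F(y)) ≤ ((M+M')/L)·𝔡_L(x,y)`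
for every `y`. -/
theorem dill_feld_pointwise_lipschitz {A : Type*} [Inhabited A] (s : ℕ) (hs : 1 ≤ s)
    (f : (Fin s → A) → List A) (hf : ∀ u, f u ≠ [])
    (F : (ℕ → A) → ℕ → A) (hF : IsDillVia f F) (M M' : ℕ)
    (h1 : ∀ (u : List A) (j : ℕ), j < u.length →
      levD (fstar f (u.eraseIdx j)) (fstar f u) ≤
        (M : ℝ) + (((fstar f u).length : ℝ) - ((fstar f (u.eraseIdx j)).length : ℝ)) / 2)
    (h2 : ∀ (u : List A) (j : ℕ), j < u.length →
      levD (fstar f (u.eraseIdx j)) (fstar f u) ≤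
        (M' : ℝ) - (((fstar f u).length : ℝ) - ((fstar f (u.eraseIdx j)).length : ℝ)) / 2)
    (L : ℕ) (hL : 0 < L) (x : ℕ → A)
    (hx : ∀ i : ℕ, L ≤ (f (window x i s)).length) :
    ∀ y : ℕ → A, feld (F x) (F y) ≤ (((M : ℝ) + (M' : ℝ)) / L) * feld x y := by
  exact dill_feld_pointwise_lipschitz_general (E := 0) hF ⟨h1, h2⟩ (Nat.cast_pos.mpr hL)
    (fun n => by simpa using mul_le_cocycle (fun i => Nat.cast_le.mpr (hx i)) n)
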